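/- Let k be a field, n ≥ 1 and d ≥ 1 natural numbers, and let I be a proper ideal of the polynomial ring k[x_1,…,x_n] generated by polynomials of total degree at most d. Suppose that for every polynomial f of total degree at most (2d)^(n·(n!)·2^((n−1)n)) with f ∉ I, there exists g ∈ k[x_1,…,x_n] with f·g − 1 ∈ I. Then I is a maximal ideal. -/

import Mathlib

/-!
Among the images of the variables in `A = k[x₁,…,xₙ]/I`, choose a maximal subfamily satisfying no
nontrivial relation over `k` up to a certain degree, the threshold depending on the number `t` of
variables left out. Let `P` be the polynomial ring in the chosen variables. By maximality, every
variable left out is a root of a polynomial over `P` of small degree, and these `t` polynomials can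
be given the same degree `D` and the same leading coefficient `h`.

* *Elimination.* In the `Frac P`-algebra defined by these `t` equations, the monomials with all
  exponents below `D` form a basis. If `P → A` killed some `q ≠ 0`, the generators of `I` would
  generate the unit ideal of this algebra, so their products with the basis monomials would span it
  over `Frac P`. Multiplied by powers of `h`, they reduce to relations of small degree between the
  same monomials in `A`, and a nonzero determinant of such relations is a nonzero element of `P`
  of small degree which vanishes in `A`, against the choice of the subfamily. So `P` embeds in `A`.
* *No variable is chosen.* If `X` is a chosen variable, then `1 + X * h` has small degree and is
  nonzero in `A`, hence has an inverse `g` there. For large `a`, `h ^ a * g` is integral over `P`;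
  as `1 + X * h` is coprime to `h ^ a` and `P` embeds in `A`, `1 + X * h` is a unit of `P`, which
  is absurd.
* *Conclusion.* Now `P = k`, so `h` is a nonzero constant and every element of `A` is represented by
  a combination of monomials with exponents below `D`. As its degree is small, it is zero or
  invertible in `A`.
-/

open MvPolynomial
open scoped Pointwise TensorProduct

namespace MaximalUpToDegree

section Determinants

variable {ι : Type*} [Fintype ι] [DecidableEq ι]

theorem exists_det_ne_zero_of_span_eq_top {R K : Type*} [CommRing R] [Field K] [Algebra R K]
    {W : Set (ι → R)} (hW : Submodule.span K ((algebraMap R K ∘ ·) '' W) = ⊤) :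
    ∃ M : Matrix ι ι R, (∀ i, M i ∈ W) ∧ M.det ≠ 0 := by
  obtain ⟨t, htW, htspan, htli⟩ := exists_linearIndependent K ((algebraMap R K ∘ ·) '' W)
  let b : Module.Basis t K (ι → K) := .mk htli (by rw [Subtype.range_coe, htspan, hW])
  let e : ι ≃ t := (Pi.basisFun K ι).indexEquiv b
  choose M hMW hM using fun i => htW (e i).2
  have hrow : ((algebraMap R K).mapMatrix (Matrix.of M)).row = fun i => (e i : ι → K) := funext hM
  have hunit : IsUnit ((algebraMap R K).mapMatrix (Matrix.of M)) := by
    rw [← Matrix.linearIndependent_rows_iff_isUnit, hrow]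
    exact htli.comp e e.injective
  refine ⟨Matrix.of M, hMW, fun hdet => ?_⟩
  rw [Matrix.isUnit_iff_isUnit_det, ← RingHom.map_det, hdet, map_zero] at hunit
  exact not_isUnit_zero hunit

theorem det_smul_eq_zero {R N : Type*} [CommRing R] [AddCommGroup N] [Module R N]
    {M : Matrix ι ι R} {v : ι → N} (hM : ∀ i, ∑ j, M i j • v j = 0) (j : ι) :
    M.det • v j = 0 := by
  calc M.det • v j = ∑ l, (M.adjugate * M) j l • v l := by
        simp [Matrix.adjugate_mul, Matrix.one_apply]
    _ = ∑ i, M.adjugate j i • ∑ l, M i l • v l := by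
        simp only [Matrix.mul_apply, Finset.sum_smul, Finset.smul_sum, mul_smul]
        exact Finset.sum_comm
    _ = 0 := by simp [hM]

theorem totalDegree_det_le {k τ : Type*} [CommRing k] {M : Matrix ι ι (MvPolynomial τ k)} {b : ℕ}
    (hM : ∀ i j, (M i j).totalDegree ≤ b) : M.det.totalDegree ≤ Fintype.card ι * b := by
  rw [Matrix.det_apply]
  refine totalDegree_finsetSum_le fun π _ => (totalDegree_smul_le _ _).trans ?_
  refine (totalDegree_finsetProd _ _).trans ((Finset.sum_le_sum fun i _ => hM _ _).trans ?_)
  simp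

end Determinants

section Filtration

variable {k C ν : Type*} [CommRing k] [CommRing C] [Algebra k C]

theorem pow_mul_prod_mul_mem {V : ℕ → Submodule k C} {c : C} {x : ν → C}
    (hc : ∀ a, ∀ z ∈ V a, c * z ∈ V (a + 1)) (hx : ∀ a v, ∀ z ∈ V a, c * x v * z ∈ V (a + 1))
    {z : C} (hz : z ∈ V 0) (m : Multiset ν) {a : ℕ} (ha : m.card ≤ a) :
    c ^ a * (m.map x).prod * z ∈ V a := by
  induction m using Multiset.induction_on generalizing a with
  | empty =>
    clear ha
    induction a with
    | zero => simpa using hz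
    | succ a ih => simpa [pow_succ', mul_assoc] using hc a _ ih
  | cons v m ih =>
    obtain ⟨a, rfl⟩ := Nat.exists_eq_add_of_le' (show 1 ≤ a by grind [Multiset.card_cons])
    have := hx a v _ (ih (a := a) (by simpa using ha))
    rw [Multiset.map_cons, Multiset.prod_cons]
    convert this using 1
    ring

theorem pow_mul_aeval_mul_mem {V : ℕ → Submodule k C} {c : C} {x : ν → C}
    (hc : ∀ a, ∀ z ∈ V a, c * z ∈ V (a + 1)) (hx : ∀ a v, ∀ z ∈ V a, c * x v * z ∈ V (a + 1))
    {z : C} (hz : z ∈ V 0) {f : MvPolynomial ν k} {a : ℕ} (hf : f.totalDegree ≤ a) :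
    c ^ a * aeval x f * z ∈ V a := by
  rw [aeval_def, eval₂_eq, Finset.mul_sum, Finset.sum_mul]
  refine Submodule.sum_mem _ fun m hm => ?_
  have hcard : m.toMultiset.card ≤ a := by
    rw [Finsupp.card_toMultiset]
    exact (le_totalDegree hm).trans hf
  convert (V a).smul_mem (coeff m f) (pow_mul_prod_mul_mem hc hx hz m.toMultiset hcard) using 1
  have hprod : (m.toMultiset.map x).prod = ∏ v ∈ m.support, x v ^ m v := by
    rw [Finsupp.toMultiset_map, Finsupp.prod_toMultiset, Finsupp.prod_mapDomain_index] <;>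
      simp [Finsupp.prod, pow_add]
  rw [hprod, Algebra.smul_def]
  ring

end Filtration

section TruncatedSpan

variable {k τ T C : Type*} [CommRing k] [Fintype T] [CommRing C] {D : ℕ}

/-- The monomial in the family `y` whose exponents, all below `D`, are given by `β`. -/
def truncatedMonomial (y : T → C) (β : T → Fin D) : C := ∏ j, y j ^ (β j : ℕ)

@[simp]
theorem truncatedMonomial_zero [NeZero D] (y : T → C) :
    truncatedMonomial y (0 : T → Fin D) = 1 := by
  simp [truncatedMonomial]

theorem map_truncatedMonomial {C' G : Type*} [CommRing C'] [FunLike G C C'] [RingHomClass G C C']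
    (φ : G) (y : T → C) (β : T → Fin D) :
    φ (truncatedMonomial y β) = truncatedMonomial (φ ∘ y) β := by
  simp [truncatedMonomial]

variable [DecidableEq T]

theorem exists_truncatedMonomial_update_eq (y : T → C) (β : T → Fin D) (j : T) :
    ∃ m : C, ∀ i : Fin D, truncatedMonomial y (Function.update β j i) = y j ^ (i : ℕ) * m := by
  refine ⟨∏ l ∈ Finset.univ.erase j, y l ^ (β l : ℕ), fun i => ?_⟩
  rw [truncatedMonomial, ← Finset.mul_prod_erase _ _ (Finset.mem_univ j), Function.update_self]
  congr 1
  refine Finset.prod_congr rfl fun l hl => ?_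
  rw [Function.update_of_ne (Finset.ne_of_mem_erase hl)]

variable [Algebra k C] [Algebra (MvPolynomial τ k) C] [IsScalarTower k (MvPolynomial τ k) C]

variable (k τ D) in
/-- The combinations of the truncated monomials in `y` whose coefficients are polynomials in the
variables `τ` of total degree at most `b`. -/
noncomputable def truncatedSpan (y : T → C) (b : ℕ) : Submodule k C :=
  (Submodule.pi Set.univ fun _ : T → Fin D => restrictTotalDegree τ k b).map
    ((Fintype.linearCombination (MvPolynomial τ k) (truncatedMonomial y)).restrictScalars k)

theorem mem_truncatedSpan {y : T → C} {b : ℕ} {z : C} :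
    z ∈ truncatedSpan k τ D y b ↔ ∃ w : (T → Fin D) → MvPolynomial τ k,
      (∀ β, (w β).totalDegree ≤ b) ∧ ∑ β, w β • truncatedMonomial y β = z := by
  simp [truncatedSpan, Submodule.mem_map, Submodule.mem_pi, mem_restrictTotalDegree,
    Fintype.linearCombination_apply]

theorem truncatedSpan_mono (y : T → C) : Monotone (truncatedSpan k τ D y) := by
  intro b b' hb z hz
  obtain ⟨w, hw, rfl⟩ := mem_truncatedSpan.mp hz
  exact mem_truncatedSpan.mpr ⟨w, fun β => (hw β).trans hb, rfl⟩

theorem smul_truncatedMonomial_mem (y : T → C) {p : MvPolynomial τ k} {b : ℕ}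
    (hp : p.totalDegree ≤ b) (β : T → Fin D) :
    p • truncatedMonomial y β ∈ truncatedSpan k τ D y b := by
  refine mem_truncatedSpan.mpr ⟨Pi.single β p, fun γ => ?_, ?_⟩
  · obtain rfl | hγ := eq_or_ne γ β <;> simp [*]
  · simp [Pi.single_apply]

theorem smul_mem_truncatedSpan {y : T → C} {p : MvPolynomial τ k} {a b : ℕ} {z : C}
    (hp : p.totalDegree ≤ a) (hz : z ∈ truncatedSpan k τ D y b) :
    p • z ∈ truncatedSpan k τ D y (a + b) := by
  obtain ⟨w, hw, rfl⟩ := mem_truncatedSpan.mp hz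
  refine mem_truncatedSpan.mpr
    ⟨fun β => p * w β, fun β => (totalDegree_mul _ _).trans (add_le_add hp (hw β)), ?_⟩
  simp [Finset.smul_sum, mul_smul]

end TruncatedSpan

section Evaluation

variable {k τ T C : Type*} [CommRing k] [CommRing C] [Algebra k C] [Algebra (MvPolynomial τ k) C]

/-- Evaluation of a polynomial in two blocks of variables: the variables in `τ` are sent to their
images in the `MvPolynomial τ k`-algebra `C`, the others to the family `y`. -/
noncomputable def evalSum (y : T → C) : MvPolynomial (τ ⊕ T) k →ₐ[k] C :=
  aeval (Sum.elim (fun i => algebraMap (MvPolynomial τ k) C (X i)) y)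

variable [IsScalarTower k (MvPolynomial τ k) C]

theorem map_evalSum {C' : Type*} [CommRing C'] [Algebra k C'] [Algebra (MvPolynomial τ k) C']
    [IsScalarTower k (MvPolynomial τ k) C'] (φ : C →ₐ[MvPolynomial τ k] C') (y : T → C)
    (f : MvPolynomial (τ ⊕ T) k) :
    φ (evalSum y f) = evalSum (φ ∘ y) f := by
  suffices (φ.restrictScalars k).comp (evalSum y) = evalSum (φ ∘ y) from
    DFunLike.congr_fun this f
  ext (i | j) <;> simp [evalSum]

@[simp]
theorem evalSum_rename_inl (y : T → C) (p : MvPolynomial τ k) :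
    evalSum y (rename Sum.inl p) = algebraMap (MvPolynomial τ k) C p := by
  suffices (evalSum y).comp (rename Sum.inl) = IsScalarTower.toAlgHom k (MvPolynomial τ k) C from
    DFunLike.congr_fun this p
  ext i
  simp [evalSum]

end Evaluation

section LiftTruncatedSpan

variable {k τ T C : Type*} [CommRing k] [Fintype T] [DecidableEq T] [CommRing C] [Algebra k C]
  [Algebra (MvPolynomial τ k) C] [IsScalarTower k (MvPolynomial τ k) C] {y : T → C} {D : ℕ}

theorem exists_evalSum_eq_of_mem_truncatedSpan {b : ℕ} {z : C}
    (hz : z ∈ truncatedSpan k τ D y b) :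
    ∃ f : MvPolynomial (τ ⊕ T) k, f.totalDegree ≤ b + Fintype.card T * (D - 1) ∧
      evalSum y f = z := by
  obtain ⟨w, hw, rfl⟩ := mem_truncatedSpan.mp hz
  refine ⟨∑ β, rename Sum.inl (w β) * truncatedMonomial (fun j => X (Sum.inr j)) β,
    totalDegree_finsetSum_le fun β _ => (totalDegree_mul _ _).trans
      (add_le_add ((totalDegree_rename_le _ _).trans (hw β)) ?_), ?_⟩
  · refine (totalDegree_finsetProd _ _).trans ((Finset.sum_le_card_nsmul _ _ (D - 1) ?_).trans ?_)
    · intro j _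
      rw [X_pow_eq_monomial]
      refine (totalDegree_monomial_le _ _).trans ?_
      rw [Finsupp.sum_single_index rfl]
      exact Nat.le_sub_one_of_lt (β j).2
    · simp
  · have hX : (evalSum y : MvPolynomial (τ ⊕ T) k →ₐ[k] C) ∘ (fun j => X (Sum.inr j)) = y := by
      funext j
      simp [evalSum]
    simp only [map_sum, map_mul, evalSum_rename_inl, map_truncatedMonomial, hX, Algebra.smul_def]

end LiftTruncatedSpan

section Reduction

variable {k τ T C : Type*} [CommRing k] {r : T → Polynomial (MvPolynomial τ k)}
  {h : MvPolynomial τ k} {D H : ℕ}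

/-- The polynomials `r j` all have degree `D` and the same nonzero leading coefficient `h`; their
coefficients, and `h` even when there are no `r j`, have total degree at most `H`. -/
structure HasCommonLeadingCoeff (r : T → Polynomial (MvPolynomial τ k)) (h : MvPolynomial τ k)
    (D H : ℕ) : Prop where
  ne_zero : h ≠ 0
  totalDegree_le : h.totalDegree ≤ H
  natDegree_eq : ∀ j, (r j).natDegree = D
  leadingCoeff_eq : ∀ j, (r j).leadingCoeff = h
  totalDegree_coeff_le : ∀ j i, ((r j).coeff i).totalDegree ≤ H

variable [CommRing C] [Algebra k C] [Algebra (MvPolynomial τ k) C]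
  [IsScalarTower k (MvPolynomial τ k) C] {y : T → C}

variable [Fintype T] [DecidableEq T]

theorem HasCommonLeadingCoeff.smul_pow_mem (hr : HasCommonLeadingCoeff r h D H)
    (hy : ∀ j, Polynomial.aeval (y j) (r j) = 0) (j : T) (β : T → Fin D) :
    h • (y j * truncatedMonomial y β) ∈ truncatedSpan k τ D y H := by
  obtain ⟨m, hm⟩ := exists_truncatedMonomial_update_eq y β j
  have hβ : y j * truncatedMonomial y β = y j ^ (β j + 1 : ℕ) * m := by
    rw [← Function.update_eq_self j β, hm, Function.update_self]
    ring
  rw [hβ]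
  obtain hlt | heq : (β j + 1 : ℕ) < D ∨ (β j + 1 : ℕ) = D := by omega
  · rw [← hm ⟨β j + 1, hlt⟩]
    exact smul_truncatedMonomial_mem y hr.totalDegree_le _
  · have hrel : h • y j ^ D = -∑ i : Fin D, (r j).coeff i • y j ^ (i : ℕ) := by
      rw [eq_neg_iff_add_eq_zero, add_comm, ← hy j, Polynomial.aeval_eq_sum_range,
        Finset.sum_range_succ, hr.natDegree_eq, Finset.sum_range, ← hr.leadingCoeff_eq j,
        Polynomial.leadingCoeff, hr.natDegree_eq]
    rw [heq, ← smul_mul_assoc, hrel, neg_mul, Finset.sum_mul]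
    refine neg_mem (sum_mem fun i _ => ?_)
    rw [smul_mul_assoc, ← hm i]
    exact smul_truncatedMonomial_mem y (hr.totalDegree_coeff_le j i) _

theorem HasCommonLeadingCoeff.smul_mul_mem (hr : HasCommonLeadingCoeff r h D H)
    (hy : ∀ j, Polynomial.aeval (y j) (r j) = 0) (j : T) {b : ℕ} {z : C}
    (hz : z ∈ truncatedSpan k τ D y b) : h • (y j * z) ∈ truncatedSpan k τ D y (b + H) := by
  obtain ⟨w, hw, rfl⟩ := mem_truncatedSpan.mp hz
  rw [Finset.mul_sum, Finset.smul_sum]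
  refine sum_mem fun β _ => ?_
  rw [mul_smul_comm, smul_comm]
  exact smul_mem_truncatedSpan (hw β) (hr.smul_pow_mem hy j β)

theorem HasCommonLeadingCoeff.pow_smul_evalSum_mul_mem [Nontrivial k]
    (hr : HasCommonLeadingCoeff r h D H)
    (hy : ∀ j, Polynomial.aeval (y j) (r j) = 0) {f : MvPolynomial (τ ⊕ T) k} {a : ℕ}
    (hf : f.totalDegree ≤ a) (β : T → Fin D) :
    h ^ a • (evalSum y f * truncatedMonomial y β) ∈ truncatedSpan k τ D y (a * (H + 1)) := by
  rw [Algebra.smul_def, map_pow, ← mul_assoc]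
  refine pow_mul_aeval_mul_mem (V := fun a => truncatedSpan k τ D y (a * (H + 1)))
    (fun a z hz => ?_) (fun a v z hz => ?_) ?_ hf
  · rw [← Algebra.smul_def]
    exact truncatedSpan_mono y (by grind) (smul_mem_truncatedSpan hr.totalDegree_le hz)
  · cases v with
    | inl i =>
      have hi : (h * X i).totalDegree ≤ H + 1 :=
        (totalDegree_mul _ _).trans (add_le_add hr.totalDegree_le (totalDegree_X i).le)
      rw [Sum.elim_inl, ← map_mul, ← Algebra.smul_def]
      exact truncatedSpan_mono y (by grind) (smul_mem_truncatedSpan hi hz)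
    | inr j =>
      rw [Sum.elim_inr, mul_assoc, ← Algebra.smul_def]
      exact truncatedSpan_mono y (by grind) (hr.smul_mul_mem hy j hz)
  · simpa using smul_truncatedMonomial_mem y (p := (1 : MvPolynomial τ k)) (by simp) β

end Reduction

section BasisAlgebra

universe u v

variable {F : Type u} {T : Type v} [Fintype T] {D : ℕ}

theorem exists_basis_eq_truncatedMonomial_of_monic [CommRing F] {q : T → Polynomial F}
    (hq : ∀ j, (q j).Monic) (hD : ∀ j, (q j).natDegree = D) :
    ∃ (B : Type max u v) (_ : CommRing B) (_ : Algebra F B) (y : T → B)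
      (b : Module.Basis (T → Fin D) F B),
      (∀ j, Polynomial.aeval (y j) (q j) = 0) ∧ ⇑b = truncatedMonomial y := by
  classical
  let b (j : T) : Module.Basis (Fin D) F (AdjoinRoot (q j)) :=
    (AdjoinRoot.powerBasis' (hq j)).basis.reindex (finCongr (hD j))
  refine ⟨⨂[F] j, AdjoinRoot (q j), inferInstance, inferInstance,
    fun j => PiTensorProduct.singleAlgHom j (AdjoinRoot.root (q j)),
    Basis.piTensorProduct b, fun j => ?_, funext fun β => ?_⟩
  · rw [Polynomial.aeval_algHom_apply, AdjoinRoot.aeval_eq, AdjoinRoot.mk_self, map_zero]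
  · have hb (j : T) : b j (β j) = AdjoinRoot.root (q j) ^ (β j : ℕ) := by
      rw [Module.Basis.reindex_apply, PowerBasis.basis_eq_pow]
      rfl
    simp only [Basis.piTensorProduct_apply, hb, truncatedMonomial, ← map_pow]
    simp only [PiTensorProduct.singleAlgHom_apply, ← PiTensorProduct.tprod_prod]
    exact congrArg _ (Finset.univ_prod_mulSingle _).symm

theorem exists_basis_eq_truncatedMonomial_of_ne_zero [Field F] {q : T → Polynomial F}
    (hq : ∀ j, q j ≠ 0) (hD : ∀ j, (q j).natDegree = D) :
    ∃ (B : Type max u v) (_ : CommRing B) (_ : Algebra F B) (y : T → B)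
      (b : Module.Basis (T → Fin D) F B),
      (∀ j, Polynomial.aeval (y j) (q j) = 0) ∧ ⇑b = truncatedMonomial y := by
  obtain ⟨B, _, _, y, b, hy, hb⟩ := exists_basis_eq_truncatedMonomial_of_monic
    (fun j => Polynomial.monic_mul_leadingCoeff_inv (hq j))
    (fun j => (Polynomial.natDegree_mul_leadingCoeff_inv _ (hq j)).trans (hD j))
  refine ⟨B, inferInstance, inferInstance, y, b, fun j => ?_, hb⟩
  have hunit : IsUnit (algebraMap F B (q j).leadingCoeff⁻¹) :=
    (IsUnit.mk0 _ (by simpa using hq j)).map _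
  simpa [hunit.mul_left_eq_zero] using hy j

end BasisAlgebra

section Elimination

variable {k τ T A B : Type*} [CommRing k] [Fintype T]
  {r : T → Polynomial (MvPolynomial τ k)} {h : MvPolynomial τ k} {d D H : ℕ}
  [CommRing A] [Algebra (MvPolynomial τ k) A] {y : T → A}
  [CommRing B] [Algebra (MvPolynomial τ k) B] {z : T → B}

variable (D) in
/-- The coefficient vectors of total degree at most `b` of the linear relations between the
truncated monomials in `y`. -/
def boundedRelations [DecidableEq T] (y : T → A) (b : ℕ) : Set ((T → Fin D) → MvPolynomial τ k) :=
  {w | (∀ β, (w β).totalDegree ≤ b) ∧ ∑ β, w β • truncatedMonomial y β = 0}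

theorem exists_det_ne_zero_algebraMap_det_eq_zero [DecidableEq T] [NeZero D] {b : ℕ}
    {F : Type*} [Field F] [Algebra (MvPolynomial τ k) F]
    (hF : Submodule.span F ((algebraMap (MvPolynomial τ k) F ∘ ·) '' boundedRelations D y b) = ⊤) :
    ∃ q : MvPolynomial τ k, q ≠ 0 ∧ q.totalDegree ≤ D ^ Fintype.card T * b ∧
      algebraMap (MvPolynomial τ k) A q = 0 := by
  obtain ⟨M, hM, hdet⟩ := exists_det_ne_zero_of_span_eq_top hF
  refine ⟨M.det, hdet, ?_, ?_⟩
  · simpa using totalDegree_det_le fun β => (hM β).1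
  · have hzero : M.det • truncatedMonomial y (0 : T → Fin D) = 0 :=
      det_smul_eq_zero (fun β => (hM β).2) 0
    rwa [truncatedMonomial_zero, ← Algebra.algebraMap_eq_smul_one] at hzero

variable [Algebra k A] [IsScalarTower k (MvPolynomial τ k) A]
  [Algebra k B] [IsScalarTower k (MvPolynomial τ k) B]

theorem HasCommonLeadingCoeff.exists_common_reduction [DecidableEq T] [Nontrivial k]
    (hr : HasCommonLeadingCoeff r h D H)
    (hy : ∀ j, Polynomial.aeval (y j) (r j) = 0) (hz : ∀ j, Polynomial.aeval (z j) (r j) = 0)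
    {f : MvPolynomial (τ ⊕ T) k} (hf : f.totalDegree ≤ d) (β : T → Fin D) :
    ∃ w : (T → Fin D) → MvPolynomial τ k, (∀ γ, (w γ).totalDegree ≤ d * (H + 1)) ∧
      ∑ γ, w γ • truncatedMonomial y γ = h ^ d • (evalSum y f * truncatedMonomial y β) ∧
      ∑ γ, w γ • truncatedMonomial z γ = h ^ d • (evalSum z f * truncatedMonomial z β) := by
  -- A reduction carried out in `A × B` has the same coefficients in both factors.
  let x : T → A × B := fun j => (y j, z j)
  let φ := AlgHom.fst (MvPolynomial τ k) A B
  let ψ := AlgHom.snd (MvPolynomial τ k) A B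
  have hx (j : T) : Polynomial.aeval (x j) (r j) = 0 := by
    refine Prod.ext ?_ ?_
    · exact (Polynomial.aeval_algHom_apply φ (x j) (r j)).symm.trans (hy j)
    · exact (Polynomial.aeval_algHom_apply ψ (x j) (r j)).symm.trans (hz j)
  obtain ⟨w, hw, hsum⟩ := mem_truncatedSpan.mp (hr.pow_smul_evalSum_mul_mem hx hf β)
  refine ⟨w, hw, ?_, ?_⟩
  · have hφ : φ ∘ x = y := rfl
    simpa [map_evalSum, map_truncatedMonomial, hφ] using congrArg φ hsum
  · have hψ : ψ ∘ x = z := rfl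
    simpa [map_evalSum, map_truncatedMonomial, hψ] using congrArg ψ hsum

theorem HasCommonLeadingCoeff.span_boundedRelations_eq_top [DecidableEq T] [Nontrivial k]
    {F : Type*} [Field F] [Algebra (MvPolynomial τ k) F] [FaithfulSMul (MvPolynomial τ k) F]
    [Algebra F B] [IsScalarTower (MvPolynomial τ k) F B]
    (hr : HasCommonLeadingCoeff r h D H) (hy : ∀ j, Polynomial.aeval (y j) (r j) = 0)
    (hz : ∀ j, Polynomial.aeval (z j) (r j) = 0)
    (b : Module.Basis (T → Fin D) F B) (hb : ⇑b = truncatedMonomial z)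
    {S : Set (MvPolynomial (τ ⊕ T) k)} (hdeg : ∀ f ∈ S, f.totalDegree ≤ d)
    (hSy : ∀ f ∈ S, evalSum y f = 0) (hSz : Ideal.span (evalSum z '' S) = ⊤) :
    Submodule.span F
      ((algebraMap (MvPolynomial τ k) F ∘ ·) '' boundedRelations D y (d * (H + 1))) = ⊤ := by
  have hspan : Submodule.span F (Set.range b • (evalSum z '' S)) = ⊤ := by
    rw [Submodule.span_smul_of_span_eq_top b.span_eq]
    exact congrArg (Submodule.restrictScalars F) hSz
  rw [← Submodule.map_eq_top_iff (e := b.equivFun.symm), eq_top_iff, ← hspan,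
    Submodule.span_le]
  rintro _ ⟨_, ⟨β, rfl⟩, _, ⟨f, hf, rfl⟩, rfl⟩
  obtain ⟨w, hw, hwy, hwz⟩ := hr.exists_common_reduction hy hz (hdeg f hf) β
  have hh : algebraMap (MvPolynomial τ k) F h ^ d ≠ 0 :=
    pow_ne_zero _ ((FaithfulSMul.algebraMap_injective _ F).ne_iff' (map_zero _) |>.mpr hr.ne_zero)
  have hwR : w ∈ boundedRelations D y (d * (H + 1)) := ⟨hw, by rw [hwy, hSy f hf]; simp⟩
  refine ⟨(algebraMap (MvPolynomial τ k) F h ^ d)⁻¹ • (algebraMap (MvPolynomial τ k) F ∘ w),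
    Submodule.smul_mem _ _ (Submodule.subset_span ⟨w, hwR, rfl⟩), ?_⟩
  have hval : b.equivFun.symm (algebraMap (MvPolynomial τ k) F ∘ w) =
      ∑ γ, w γ • truncatedMonomial z γ := by simp [Module.Basis.equivFun_symm_apply, hb]
  rw [LinearEquiv.coe_coe, map_smul, hval, hwz, inv_smul_eq_iff₀ hh, ← map_pow, algebraMap_smul,
    hb]
  exact congrArg _ (mul_comm _ _)

theorem HasCommonLeadingCoeff.exists_totalDegree_le_algebraMap_eq_zero [IsDomain k] [NeZero D]
    (hr : HasCommonLeadingCoeff r h D H) (hy : ∀ j, Polynomial.aeval (y j) (r j) = 0)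
    {S : Set (MvPolynomial (τ ⊕ T) k)} (hdeg : ∀ f ∈ S, f.totalDegree ≤ d)
    (hSy : ∀ f ∈ S, evalSum y f = 0) {q : MvPolynomial τ k} (hq : q ≠ 0)
    (hqS : rename Sum.inl q ∈ Ideal.span S) :
    ∃ q' : MvPolynomial τ k, q' ≠ 0 ∧ q'.totalDegree ≤ D ^ Fintype.card T * (d * (H + 1)) ∧
      algebraMap (MvPolynomial τ k) A q' = 0 := by
  classical
  let F := FractionRing (MvPolynomial τ k)
  have hinj : Function.Injective (algebraMap (MvPolynomial τ k) F) := IsFractionRing.injective _ _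
  have hne (j : T) : (r j).map (algebraMap _ F) ≠ 0 := by
    refine (Polynomial.map_ne_zero_iff hinj).mpr (Polynomial.leadingCoeff_ne_zero.mp ?_)
    rw [hr.leadingCoeff_eq]
    exact hr.ne_zero
  have hD (j : T) : ((r j).map (algebraMap _ F)).natDegree = D := by
    rw [Polynomial.natDegree_map_eq_of_injective hinj, hr.natDegree_eq]
  obtain ⟨B, _, _, z, b, hz, hb⟩ := exists_basis_eq_truncatedMonomial_of_ne_zero hne hD
  let _ : Algebra (MvPolynomial τ k) B :=
    ((algebraMap F B).comp (algebraMap (MvPolynomial τ k) F)).toAlgebra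
  let _ : Algebra k B := ((algebraMap (MvPolynomial τ k) B).comp C).toAlgebra
  have : IsScalarTower (MvPolynomial τ k) F B := .of_algebraMap_eq' rfl
  have : IsScalarTower k (MvPolynomial τ k) B := .of_algebraMap_eq' rfl
  have hunit : IsUnit (algebraMap (MvPolynomial τ k) B q) := by
    rw [IsScalarTower.algebraMap_apply _ F]
    exact (IsUnit.mk0 _ (by simpa using hq)).map _
  have hSz : Ideal.span (evalSum z '' S) = ⊤ := by
    refine Ideal.eq_top_of_isUnit_mem _ ?_ hunit
    rw [← Ideal.map_span, ← evalSum_rename_inl (k := k) z]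
    exact Ideal.mem_map_of_mem _ hqS
  refine exists_det_ne_zero_algebraMap_det_eq_zero (F := F)
    (hr.span_boundedRelations_eq_top hy (fun j => ?_) b hb hdeg hSy hSz)
  rw [← hz j, Polynomial.aeval_map_algebraMap]

end Elimination

section Integrality

theorem isUnit_of_isIntegral_of_isCoprime {P A : Type*} [CommRing P] [CommRing A] [Algebra P A]
    [FaithfulSMul P A] {p q : P} {x : A} (hpq : IsCoprime p q) (hx : IsIntegral P x)
    (hpx : algebraMap P A p * x = algebraMap P A q) : IsUnit p := by
  obtain ⟨a, b, hab⟩ := hpq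
  let O := integralClosure P A
  let u : O := algebraMap P O b * ⟨x, hx⟩ + algebraMap P O a
  have hu : algebraMap P O p * u = 1 := by
    refine Subtype.ext ?_
    calc algebraMap P A p * (algebraMap P A b * x + algebraMap P A a)
        = algebraMap P A (a * p + b * q) := by rw [map_add, map_mul, map_mul, ← hpx]; ring
      _ = 1 := by rw [hab, map_one]
  have : FaithfulSMul P O := .tower_bot P O A
  exact isUnit_of_map_unit (algebraMap P O) p (.of_mul_eq_one _ hu)

theorem not_isUnit_one_add_X_mul {k τ : Type*} [CommRing k] [IsDomain k] {h : MvPolynomial τ k}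
    (hh : h ≠ 0) (i : τ) : ¬IsUnit (1 + X i * h) := by
  have hdeg : (X i * h).totalDegree = 1 + h.totalDegree := by
    rw [totalDegree_mul_of_isDomain (X_ne_zero i) hh, totalDegree_X]
  rw [isUnit_iff_totalDegree_of_isReduced, totalDegree_add_eq_right_of_totalDegree_lt] <;>
    simp [hdeg]

variable {k τ T A : Type*} [CommRing k] {r : T → Polynomial (MvPolynomial τ k)}
  {h : MvPolynomial τ k} [CommRing A] [Algebra k A] [Algebra (MvPolynomial τ k) A]
  [IsScalarTower k (MvPolynomial τ k) A] {y : T → A}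

theorem isIntegral_pow_smul_evalSum (hr : ∀ j, (r j).leadingCoeff = h)
    (hy : ∀ j, Polynomial.aeval (y j) (r j) = 0) (f : MvPolynomial (τ ⊕ T) k) :
    IsIntegral (MvPolynomial τ k) (h ^ f.totalDegree • evalSum y f) := by
  let P := MvPolynomial τ k
  have hmem (x : A) : x ∈ (integralClosure P A).toSubmodule.restrictScalars k ↔ IsIntegral P x :=
    Iff.rfl
  rw [← hmem, Algebra.smul_def, map_pow, ← mul_one (_ * _)]
  refine pow_mul_aeval_mul_mem
    (V := fun _ => (integralClosure P A).toSubmodule.restrictScalars k) (fun _ z hz => ?_)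
    (fun _ v z hz => ?_) ((hmem 1).mpr isIntegral_one) le_rfl
  · exact isIntegral_algebraMap.mul hz
  · refine IsIntegral.mul ?_ hz
    cases v with
    | inl i => exact isIntegral_algebraMap.mul isIntegral_algebraMap
    | inr j =>
      rw [Sum.elim_inr, ← Algebra.smul_def, ← hr j]
      exact isIntegral_leadingCoeff_smul _ _ (hy j)

theorem not_isUnit_algebraMap_one_add_X_mul [IsDomain k] [FaithfulSMul (MvPolynomial τ k) A]
    (hr : ∀ j, (r j).leadingCoeff = h) (hh : h ≠ 0)
    (hy : ∀ j, Polynomial.aeval (y j) (r j) = 0)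
    (hsurj : Function.Surjective (evalSum (k := k) (τ := τ) y)) (i : τ) :
    ¬IsUnit (algebraMap (MvPolynomial τ k) A (1 + X i * h)) := by
  intro hunit
  obtain ⟨g, hg⟩ := hunit.exists_right_inv
  obtain ⟨f, rfl⟩ := hsurj g
  have hcop : IsCoprime (1 + X i * h) (h ^ f.totalDegree) := .pow_right ⟨1, -X i, by ring⟩
  refine not_isUnit_one_add_X_mul hh i
    (isUnit_of_isIntegral_of_isCoprime hcop (isIntegral_pow_smul_evalSum hr hy f) ?_)
  rw [mul_smul_comm, hg, Algebra.algebraMap_eq_smul_one]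

end Integrality

section Relations

section AlgebraicIndependentUpTo

variable {ι ι' k A : Type*} [CommRing k] [CommRing A] [Algebra k A]

variable (k) in
/-- The family `x` satisfies no nontrivial polynomial relation over `k` of total degree at most
`b`: a truncated version of `AlgebraicIndependent`. -/
def AlgebraicIndependentUpTo (b : ℕ) (x : ι → A) : Prop :=
  ∀ p : MvPolynomial ι k, p.totalDegree ≤ b → aeval x p = 0 → p = 0

theorem AlgebraicIndependentUpTo.comp {b : ℕ} {x : ι' → A} (hx : AlgebraicIndependentUpTo k b x)
    {f : ι → ι'} (hf : Function.Injective f) : AlgebraicIndependentUpTo k b (x ∘ f) := by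
  intro p hp hpx
  refine (map_eq_zero_iff _ (rename_injective f hf)).mp
    (hx _ ((totalDegree_rename_le f p).trans hp) ?_)
  rwa [aeval_rename]

theorem exists_finset_maximal_algebraicIndependentUpTo [FaithfulSMul k A] [Fintype ι]
    [DecidableEq ι] (c : ℕ → ℕ) (x : ι → A) :
    ∃ s : Finset ι, AlgebraicIndependentUpTo k (c (sᶜ.card + 1)) (fun i : s => x i) ∧
      ∀ j ∉ s, ¬AlgebraicIndependentUpTo k (c sᶜ.card)
        (fun o : Option s => o.elim (x j) fun i => x i) := by
  let Q (s : Finset ι) : Prop := AlgebraicIndependentUpTo k (c (sᶜ.card + 1)) fun i : s => x i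
  have hempty : Q ∅ := fun p _ hp =>
    (injective_iff_map_eq_zero _).mp
      (algebraicIndependent_empty_type_iff.mpr (FaithfulSMul.algebraMap_injective k A)) p hp
  obtain ⟨s, hs, hmax⟩ := (Set.toFinite {s | Q s}).exists_maximal ⟨∅, hempty⟩
  refine ⟨s, hs, fun j hj hind => hj ?_⟩
  have hcard : (insert j s)ᶜ.card + 1 = sᶜ.card := by
    rw [Finset.compl_insert, Finset.card_erase_add_one (by simpa using hj)]
  have hx : (fun o : Option s => o.elim (x j) fun i => x i) ∘ Finset.subtypeInsertEquivOption hj =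
      fun i : (insert j s : Finset ι) => x i := by
    funext i
    by_cases hi : (i : ι) = j <;> simp [Finset.subtypeInsertEquivOption, hi]
  have hQ := hind.comp (Finset.subtypeInsertEquivOption hj).injective
  rw [hx, ← hcard] at hQ
  exact hmax (y := insert j s) hQ (Finset.subset_insert j s) (Finset.mem_insert_self j s)

end AlgebraicIndependentUpTo

variable {k τ T A : Type*} [CommRing k] [CommRing A] [Algebra k A]
  [Algebra (MvPolynomial τ k) A] [IsScalarTower k (MvPolynomial τ k) A] {D : ℕ}

theorem exists_polynomial_of_not_algebraicIndependentUpTo {y : A}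
    (hy : ¬AlgebraicIndependentUpTo k D
      fun o : Option τ => o.elim y fun i => algebraMap (MvPolynomial τ k) A (X i)) :
    ∃ u : Polynomial (MvPolynomial τ k), u ≠ 0 ∧ u.natDegree ≤ D ∧
      (∀ i, (u.coeff i).totalDegree ≤ D) ∧ Polynomial.aeval y u = 0 := by
  simp only [AlgebraicIndependentUpTo, not_forall] at hy
  obtain ⟨p, hdeg, hpy, hp⟩ := hy
  refine ⟨optionEquivLeft k τ p, by simpa using hp, ?_, fun i => ?_, ?_⟩
  · rw [natDegree_optionEquivLeft]
    exact (degreeOf_le_totalDegree p none).trans hdeg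
  · exact (totalDegree_coeff_optionEquivLeft_le ..).trans hdeg
  · rw [← hpy]
    suffices ((Polynomial.aeval y).restrictScalars k).comp (optionEquivLeft k τ).toAlgHom =
        aeval fun o : Option τ => o.elim y fun i => algebraMap (MvPolynomial τ k) A (X i) from
      DFunLike.congr_fun this p
    ext (_ | i) <;> simp

variable [IsDomain k] [Fintype T]

theorem exists_hasCommonLeadingCoeff {u : T → Polynomial (MvPolynomial τ k)} (hu : ∀ j, u j ≠ 0)
    (hdeg : ∀ j, (u j).natDegree ≤ D) (hcoeff : ∀ j i, ((u j).coeff i).totalDegree ≤ D) :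
    ∃ r h, HasCommonLeadingCoeff r h D (Fintype.card T * D) ∧ ∀ j, u j ∣ r j := by
  classical
  let ℓ (s : Finset T) : MvPolynomial τ k := ∏ l ∈ s, (u l).leadingCoeff
  have hℓ (s : Finset T) : ℓ s ≠ 0 :=
    Finset.prod_ne_zero_iff.mpr fun l _ => Polynomial.leadingCoeff_ne_zero.mpr (hu l)
  have hℓdeg (s : Finset T) : (ℓ s).totalDegree ≤ s.card * D :=
    (totalDegree_finsetProd _ _).trans (Finset.sum_le_card_nsmul _ _ _ fun l _ => hcoeff l _)
  refine ⟨fun j => Polynomial.C (ℓ (Finset.univ.erase j)) *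
    (Polynomial.X ^ (D - (u j).natDegree) * u j), ℓ Finset.univ,
    ⟨hℓ _, hℓdeg _, fun j => ?_, fun j => ?_, fun j i => ?_⟩, fun j => ?_⟩
  · rw [Polynomial.natDegree_C_mul (hℓ _), Polynomial.natDegree_X_pow_mul _ (hu j)]
    have := hdeg j
    omega
  · simp only [Polynomial.leadingCoeff_mul, Polynomial.leadingCoeff_C,
      Polynomial.leadingCoeff_X_pow, one_mul]
    exact Finset.prod_erase_mul _ _ (Finset.mem_univ j)
  · have hcard : (Finset.univ.erase j).card * D + D = Fintype.card T * D := by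
      rw [← Finset.card_univ, ← Finset.card_erase_add_one (Finset.mem_univ j), add_one_mul]
    rw [Polynomial.coeff_C_mul, ← hcard]
    refine (totalDegree_mul _ _).trans (add_le_add (hℓdeg _) ?_)
    rw [Polynomial.coeff_X_pow_mul']
    split_ifs
    · exact hcoeff j _
    · simp
  · exact (dvd_mul_left _ _).mul_left _

theorem exists_hasCommonLeadingCoeff_aeval_eq_zero {y : T → A}
    (hy : ∀ j, ¬AlgebraicIndependentUpTo k D
      fun o : Option τ => o.elim (y j) fun i => algebraMap (MvPolynomial τ k) A (X i)) :
    ∃ (r : T → Polynomial (MvPolynomial τ k)) (h : MvPolynomial τ k),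
      HasCommonLeadingCoeff r h D (Fintype.card T * D) ∧
      ∀ j, Polynomial.aeval (y j) (r j) = 0 := by
  choose u hu hdeg hcoeff huy using fun j =>
    exists_polynomial_of_not_algebraicIndependentUpTo (hy j)
  obtain ⟨r, h, hr, hur⟩ := exists_hasCommonLeadingCoeff hu hdeg hcoeff
  exact ⟨r, h, hr, fun j => Polynomial.aeval_eq_zero_of_dvd_aeval_eq_zero (hur j) (huy j)⟩

end Relations

section Injectivity

variable {k τ T A : Type*} [CommRing k] [IsDomain k]
  {r : T → Polynomial (MvPolynomial τ k)} {h : MvPolynomial τ k} {d D H : ℕ}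
  [CommRing A] [Algebra k A] [Algebra (MvPolynomial τ k) A] [IsScalarTower k (MvPolynomial τ k) A]
  {y : T → A}

theorem HasCommonLeadingCoeff.isEmpty_of_forall_isUnit [FaithfulSMul (MvPolynomial τ k) A]
    (hr : HasCommonLeadingCoeff r h D H) (hy : ∀ j, Polynomial.aeval (y j) (r j) = 0)
    (hsurj : Function.Surjective (evalSum (k := k) (τ := τ) y))
    (hmax : ∀ p : MvPolynomial τ k, p.totalDegree ≤ H + 1 →
      algebraMap (MvPolynomial τ k) A p ≠ 0 → IsUnit (algebraMap (MvPolynomial τ k) A p)) :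
    IsEmpty τ := by
  refine ⟨fun i => ?_⟩
  have hdeg : (1 + X i * h).totalDegree ≤ H + 1 := by
    have hXh := (totalDegree_mul (X i) h).trans
      (add_le_add (totalDegree_X i).le hr.totalDegree_le)
    exact (totalDegree_add _ _).trans (max_le (by simp) (by omega))
  have hunit : ¬IsUnit (algebraMap (MvPolynomial τ k) A (1 + X i * h)) :=
    not_isUnit_algebraMap_one_add_X_mul hr.leadingCoeff_eq hr.ne_zero hy hsurj i
  have hzero : algebraMap (MvPolynomial τ k) A (1 + X i * h) = 0 :=
    by_contra fun hne => hunit (hmax _ hdeg hne)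
  have hone : 1 + X i * h = 0 :=
    (FaithfulSMul.algebraMap_injective (MvPolynomial τ k) A).eq_iff' (map_zero _) |>.mp hzero
  simpa using congrArg constantCoeff hone

variable [Fintype T]

theorem HasCommonLeadingCoeff.faithfulSMul [NeZero D]
    (hr : HasCommonLeadingCoeff r h D H) (hy : ∀ j, Polynomial.aeval (y j) (r j) = 0)
    {S : Set (MvPolynomial (τ ⊕ T) k)} (hdeg : ∀ f ∈ S, f.totalDegree ≤ d)
    (hker : RingHom.ker (evalSum (k := k) (τ := τ) y) = Ideal.span S)
    (hind : AlgebraicIndependentUpTo k (D ^ Fintype.card T * (d * (H + 1)))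
      fun i : τ => algebraMap (MvPolynomial τ k) A (X i)) :
    FaithfulSMul (MvPolynomial τ k) A := by
  rw [faithfulSMul_iff_algebraMap_injective, injective_iff_map_eq_zero]
  intro q hq
  by_contra hne
  have hqS : rename Sum.inl q ∈ Ideal.span S := by
    rw [← hker, RingHom.mem_ker, evalSum_rename_inl, hq]
  have hSy : ∀ f ∈ S, evalSum y f = 0 := fun f hf => by
    rw [← RingHom.mem_ker, hker]
    exact Ideal.subset_span hf
  obtain ⟨q', hq', hq'deg, hq'zero⟩ :=
    hr.exists_totalDegree_le_algebraMap_eq_zero hy hdeg hSy hne hqS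
  refine hq' (hind q' hq'deg ?_)
  rw [← hq'zero]
  suffices aeval (fun i : τ => algebraMap (MvPolynomial τ k) A (X i)) =
      IsScalarTower.toAlgHom k (MvPolynomial τ k) A from DFunLike.congr_fun this q'
  ext i
  simp

end Injectivity

section Field

variable {k τ T A : Type*} [Field k] [Fintype T]
  {r : T → Polynomial (MvPolynomial τ k)} {h : MvPolynomial τ k} {b d D H : ℕ}
  [CommRing A] [Algebra k A] [Algebra (MvPolynomial τ k) A] [IsScalarTower k (MvPolynomial τ k) A]
  {y : T → A}

theorem HasCommonLeadingCoeff.exists_totalDegree_le_evalSum_eq [IsEmpty τ] [NeZero D]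
    (hr : HasCommonLeadingCoeff r h D H) (hy : ∀ j, Polynomial.aeval (y j) (r j) = 0)
    (f : MvPolynomial (τ ⊕ T) k) :
    ∃ f' : MvPolynomial (τ ⊕ T) k, f'.totalDegree ≤ Fintype.card T * (D - 1) ∧
      evalSum y f' = evalSum y f := by
  classical
  obtain ⟨a, rfl⟩ : ∃ a, h = C a := ⟨_, eq_C_of_isEmpty h⟩
  have ha : a ^ f.totalDegree ≠ 0 := pow_ne_zero _ (by simpa using hr.ne_zero)
  have hred := hr.pow_smul_evalSum_mul_mem hy (le_refl f.totalDegree) 0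
  rw [truncatedMonomial_zero, mul_one] at hred
  obtain ⟨w, -, hw⟩ := mem_truncatedSpan.mp hred
  have hmem : evalSum y f ∈ truncatedSpan k τ D y 0 := by
    rw [← Submodule.smul_mem_iff _ ha]
    refine mem_truncatedSpan.mpr ⟨w, fun β => ?_, ?_⟩
    · rw [eq_C_of_isEmpty (w β), totalDegree_C]
    · rw [hw, ← map_pow, ← algebraMap_eq, algebraMap_smul]
  simpa using exists_evalSum_eq_of_mem_truncatedSpan hmem

theorem HasCommonLeadingCoeff.isField [NeZero D] [Nontrivial A]
    (hr : HasCommonLeadingCoeff r h D H) (hy : ∀ j, Polynomial.aeval (y j) (r j) = 0)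
    (hsurj : Function.Surjective (evalSum (k := k) (τ := τ) y))
    {S : Set (MvPolynomial (τ ⊕ T) k)} (hdeg : ∀ f ∈ S, f.totalDegree ≤ d)
    (hker : RingHom.ker (evalSum (k := k) (τ := τ) y) = Ideal.span S)
    (hind : AlgebraicIndependentUpTo k (D ^ Fintype.card T * (d * (H + 1)))
      fun i : τ => algebraMap (MvPolynomial τ k) A (X i))
    (hmax : ∀ f : MvPolynomial (τ ⊕ T) k, f.totalDegree ≤ b → evalSum y f ≠ 0 →
      IsUnit (evalSum y f))
    (hτ : Nonempty τ → H + 1 ≤ b) (hT : Fintype.card T * (D - 1) ≤ b) :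
    IsField A := by
  have : FaithfulSMul (MvPolynomial τ k) A := hr.faithfulSMul hy hdeg hker hind
  have : IsEmpty τ := by
    by_contra hne
    rw [not_isEmpty_iff] at hne
    refine (hr.isEmpty_of_forall_isUnit hy hsurj fun p hp hpz => ?_).false hne.some
    rw [← evalSum_rename_inl (k := k) y p] at hpz ⊢
    exact hmax _ ((totalDegree_rename_le _ _).trans (hp.trans (hτ hne))) hpz
  refine ⟨exists_pair_ne A, mul_comm, fun {z} hz => ?_⟩
  obtain ⟨f, rfl⟩ := hsurj z
  obtain ⟨f', hf', heq⟩ := hr.exists_totalDegree_le_evalSum_eq hy f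
  rw [← heq] at hz ⊢
  exact (hmax f' (hf'.trans hT) hz).exists_right_inv

end Field

section Bounds

/-- The degree up to which algebraic independence is tested on the family of generators, as a
function of the number of generators left out of the family. The recursion is the degree bound of
`HasCommonLeadingCoeff.exists_totalDegree_le_algebraMap_eq_zero`, for `D = degreeBound d t` and
`H = t * D`. -/
def degreeBound (d : ℕ) : ℕ → ℕ
  | 0 => 1
  | t + 1 => degreeBound d t ^ t * (d * (t * degreeBound d t + 1))

variable {d : ℕ}

theorem degreeBound_pos (hd : 1 ≤ d) (t : ℕ) : 0 < degreeBound d t := by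
  induction t with
  | zero => exact one_pos
  | succ t ih => exact Nat.mul_pos (pow_pos ih t) (by positivity)

theorem degreeBound_mono (hd : 1 ≤ d) : Monotone (degreeBound d) := by
  refine monotone_nat_of_le_succ fun t => ?_
  have hpos := degreeBound_pos hd t
  cases t with
  | zero => simpa [degreeBound] using hd
  | succ t =>
    calc degreeBound d (t + 1) = 1 * (1 * degreeBound d (t + 1)) := by ring
      _ ≤ degreeBound d (t + 1) ^ (t + 1) * (d * ((t + 1) * degreeBound d (t + 1) + 1)) :=
        Nat.mul_le_mul (Nat.one_le_pow _ _ hpos) (Nat.mul_le_mul hd (by nlinarith))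

theorem succ_le_two_mul_pow (hd : 1 ≤ d) (t : ℕ) : t + 1 ≤ (2 * d) ^ t :=
  Nat.lt_two_pow_self.trans_le (Nat.pow_le_pow_left (by omega) t)

theorem degreeBound_succ_le (hd : 1 ≤ d) (t : ℕ) :
    degreeBound d (t + 1) ≤ (2 * d) ^ ((t + 1).factorial * 2 ^ t) := by
  induction t with
  | zero => simpa [degreeBound] using (by omega : d ≤ 2 * d)
  | succ t ih =>
    set E := (t + 1).factorial * 2 ^ t
    have hE : t + 1 ≤ E :=
      (t + 1).self_le_factorial.trans (Nat.le_mul_of_pos_right _ (by positivity))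
    have hone : 1 ≤ (2 * d) ^ E := Nat.one_le_pow _ _ (by omega)
    calc degreeBound d (t + 2)
        = degreeBound d (t + 1) ^ (t + 1) * (d * ((t + 1) * degreeBound d (t + 1) + 1)) := rfl
      _ ≤ ((2 * d) ^ E) ^ (t + 1) * (2 * d * ((t + 1) * (2 * d) ^ E + (2 * d) ^ E)) := by
        gcongr
        omega
      _ = ((2 * d) ^ E) ^ (t + 1) * (2 * d * ((t + 1 + 1) * (2 * d) ^ E)) := by ring
      _ ≤ ((2 * d) ^ E) ^ (t + 1) * (2 * d * ((2 * d) ^ (t + 1) * (2 * d) ^ E)) := by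
        gcongr
        exact succ_le_two_mul_pow hd (t + 1)
      _ = (2 * d) ^ (E * (t + 1) + (1 + (t + 1) + E)) := by ring
      _ ≤ (2 * d) ^ ((t + 2).factorial * 2 ^ (t + 1)) := by
        refine Nat.pow_le_pow_right (by omega) ?_
        have : (t + 2).factorial * 2 ^ (t + 1) = (t + 2) * (2 * E) := by
          rw [Nat.factorial_succ (t + 1)]
          ring
        nlinarith

theorem mul_degreeBound_le (hd : 1 ≤ d) {n : ℕ} (hn : 1 ≤ n) :
    n * degreeBound d n ≤ (2 * d) ^ (n * n.factorial * 2 ^ ((n - 1) * n)) := by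
  obtain ⟨t, rfl⟩ := Nat.exists_eq_add_of_le' hn
  calc (t + 1) * degreeBound d (t + 1)
      ≤ (2 * d) ^ t * (2 * d) ^ ((t + 1).factorial * 2 ^ t) :=
        Nat.mul_le_mul (succ_le_two_mul_pow hd t) (degreeBound_succ_le hd t)
    _ = (2 * d) ^ (t + (t + 1).factorial * 2 ^ t) := (pow_add _ _ _).symm
    _ ≤ (2 * d) ^ ((t + 1) * (t + 1).factorial * 2 ^ (t * (t + 1))) := by
      refine Nat.pow_le_pow_right (by omega) ?_
      calc t + (t + 1).factorial * 2 ^ t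
          ≤ t * ((t + 1).factorial * 2 ^ t) + (t + 1).factorial * 2 ^ t := by
            gcongr
            exact Nat.le_mul_of_pos_right _ (by positivity)
        _ = (t + 1) * (t + 1).factorial * 2 ^ t := by ring
        _ ≤ (t + 1) * (t + 1).factorial * 2 ^ (t * (t + 1)) := by
          gcongr
          · norm_num
          · exact Nat.le_mul_of_pos_right t t.succ_pos

end Bounds

section Generators

variable {k ν A : Type*} [Field k] [CommRing A] [Algebra k A] {x : ν → A}
  {S : Set (MvPolynomial ν k)}

section Partition

variable {τ T : Type*} [Algebra (MvPolynomial τ k) A] {y : T → A} {e : ν ≃ τ ⊕ T}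

theorem ker_evalSum_eq_span (he : ∀ f, evalSum y (rename e f) = aeval (R := k) x f)
    (hker : RingHom.ker (aeval (R := k) x) = Ideal.span S) :
    RingHom.ker (evalSum (k := k) (τ := τ) y) = Ideal.span (rename e '' S) := by
  have hcomap : (RingHom.ker (evalSum (k := k) (τ := τ) y)).comap (renameEquiv k e) =
      Ideal.span S := by
    rw [← hker]
    ext f
    simp [RingHom.mem_ker, he]
  rw [← Ideal.map_span, ← hcomap]
  exact (Ideal.map_comap_of_surjective _ (renameEquiv k e).surjective _).symm

variable [Fintype ν] [Fintype T] [IsScalarTower k (MvPolynomial τ k) A] [Nontrivial A]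

theorem isField_of_forall_not_algebraicIndependentUpTo {d : ℕ} (hd : 1 ≤ d)
    (he : ∀ f, evalSum y (rename e f) = aeval (R := k) x f)
    (hsurj : Function.Surjective (aeval (R := k) x))
    (hker : RingHom.ker (aeval (R := k) x) = Ideal.span S) (hdeg : ∀ f ∈ S, f.totalDegree ≤ d)
    (hmax : ∀ f : MvPolynomial ν k,
      f.totalDegree ≤ Fintype.card ν * degreeBound d (Fintype.card ν) → aeval x f ≠ 0 →
        IsUnit (aeval x f))
    (hind : AlgebraicIndependentUpTo k (degreeBound d (Fintype.card T + 1))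
      fun i : τ => algebraMap (MvPolynomial τ k) A (X i))
    (hdep : ∀ j, ¬AlgebraicIndependentUpTo k (degreeBound d (Fintype.card T))
      fun o : Option τ => o.elim (y j) fun i => algebraMap (MvPolynomial τ k) A (X i)) :
    IsField A := by
  have : NeZero (degreeBound d (Fintype.card T)) := ⟨(degreeBound_pos hd _).ne'⟩
  obtain ⟨r, h, hr, hy⟩ := exists_hasCommonLeadingCoeff_aeval_eq_zero hdep
  let _ : Fintype τ := .ofInjective (e.symm ∘ Sum.inl) (e.symm.injective.comp Sum.inl_injective)
  have hcard : Fintype.card ν = Fintype.card τ + Fintype.card T := by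
    rw [Fintype.card_congr e, Fintype.card_sum]
  have hmono : degreeBound d (Fintype.card T) ≤ degreeBound d (Fintype.card ν) :=
    degreeBound_mono hd (by omega)
  have hpos := degreeBound_pos hd (Fintype.card ν)
  refine hr.isField (b := Fintype.card ν * degreeBound d (Fintype.card ν)) hy
    (fun a => ?_) ?_ (ker_evalSum_eq_span he hker) hind (fun f hf hfz => ?_) (fun hτ => ?_) ?_
  · obtain ⟨f, rfl⟩ := hsurj a
    exact ⟨rename e f, he f⟩
  · rintro _ ⟨f, hf, rfl⟩
    exact (totalDegree_rename_le _ _).trans (hdeg f hf)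
  · obtain ⟨f, rfl⟩ := (renameEquiv k e).surjective f
    rw [renameEquiv_apply, he] at hfz ⊢
    refine hmax f ?_ hfz
    rwa [← totalDegree_renameEquiv]
  · have hlt : Fintype.card T + 1 ≤ Fintype.card ν := by
      have := Fintype.card_pos_iff.mpr hτ
      omega
    nlinarith
  · exact Nat.mul_le_mul (by omega) ((Nat.sub_le _ _).trans hmono)

end Partition

theorem isField_of_forall_isUnit_aeval [Fintype ν] [Nontrivial A] {d : ℕ} (hd : 1 ≤ d)
    (hsurj : Function.Surjective (aeval (R := k) x))
    (hker : RingHom.ker (aeval (R := k) x) = Ideal.span S) (hdeg : ∀ f ∈ S, f.totalDegree ≤ d)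
    (hmax : ∀ f : MvPolynomial ν k,
      f.totalDegree ≤ Fintype.card ν * degreeBound d (Fintype.card ν) → aeval x f ≠ 0 →
        IsUnit (aeval x f)) :
    IsField A := by
  classical
  obtain ⟨s, hind, hdep⟩ :=
    exists_finset_maximal_algebraicIndependentUpTo (k := k) (degreeBound d) x
  have hcard : Fintype.card {v // v ∉ s} = sᶜ.card := Fintype.card_of_subtype _ (by simp)
  let _ : Algebra (MvPolynomial s k) A := (aeval fun i : s => x i).toAlgebra
  have : IsScalarTower k (MvPolynomial s k) A := .of_algebraMap_eq fun a => by
    simp [RingHom.algebraMap_toAlgebra]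
  have hX (i : s) : algebraMap (MvPolynomial s k) A (X i) = x i := by
    simp [RingHom.algebraMap_toAlgebra]
  have hx : Sum.elim (fun i : s => x i) (fun j : {v // v ∉ s} => x j) ∘
      (Equiv.sumCompl (· ∈ s)).symm = x := by
    funext v
    by_cases hv : v ∈ s <;> simp [hv]
  refine isField_of_forall_not_algebraicIndependentUpTo hd (e := (Equiv.sumCompl (· ∈ s)).symm)
    (y := fun j : {v // v ∉ s} => x j) (fun f => ?_) hsurj hker hdeg hmax ?_ fun j => ?_
  · simp only [evalSum, aeval_rename, hX, hx]
  · simpa only [hX, hcard] using hind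
  · simpa only [hX, hcard] using hdep j j.2

end Generators

end MaximalUpToDegree

open MaximalUpToDegree in
theorem maximal_up_to_bound_implies_maximal_general {k ν : Type*} [Field k] [Fintype ν] {d : ℕ}
    (hd : 1 ≤ d) {I : Ideal (MvPolynomial ν k)} (hproper : I ≠ ⊤) {S : Set (MvPolynomial ν k)}
    (hgen : I = Ideal.span S) (hdeg : ∀ f ∈ S, f.totalDegree ≤ d)
    (hmax : ∀ f : MvPolynomial ν k,
      f.totalDegree ≤ Fintype.card ν * degreeBound d (Fintype.card ν) →
      f ∉ I → ∃ g : MvPolynomial ν k, f * g - 1 ∈ I) :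
    I.IsMaximal := by
  have : Nontrivial (MvPolynomial ν k ⧸ I) := Ideal.Quotient.nontrivial_iff.mpr hproper
  have hmk : aeval (fun v => Ideal.Quotient.mk I (X v)) = Ideal.Quotient.mkₐ k I := by
    ext v
    simp
  refine Ideal.Quotient.maximal_of_isField I (isField_of_forall_isUnit_aeval (k := k) hd
    (x := fun v => Ideal.Quotient.mk I (X v)) ?_ ?_ hdeg fun f hf hfz => ?_)
  · rw [hmk]
    exact Ideal.Quotient.mkₐ_surjective k I
  · rw [hmk, ← hgen]
    exact Ideal.Quotient.mkₐ_ker k I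
  · rw [hmk, Ideal.Quotient.mkₐ_eq_mk] at hfz ⊢
    obtain ⟨g, hg⟩ := hmax f hf (Ideal.Quotient.eq_zero_iff_mem.not.mp hfz)
    refine .of_mul_eq_one (Ideal.Quotient.mk I g) ?_
    rwa [← map_mul, ← map_one (Ideal.Quotient.mk I), Ideal.Quotient.eq]

/-- If a proper ideal of `k[x₁,…,xₙ]` generated in degree at most `d`
is maximal up to `(2d)^(n·(n!)·2^((n−1)n))` (every polynomial of at most that degree not
in `I` is invertible modulo `I`), then it is maximal. -/
theorem maximal_up_to_bound_implies_maximal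
    (k : Type*) [Field k] (n d : ℕ) (hn : 1 ≤ n) (hd : 1 ≤ d)
    (I : Ideal (MvPolynomial (Fin n) k)) (hproper : I ≠ ⊤)
    (S : Set (MvPolynomial (Fin n) k)) (hgen : I = Ideal.span S)
    (hdeg : ∀ f ∈ S, f.totalDegree ≤ d)
    (hmax : ∀ f : MvPolynomial (Fin n) k,
      f.totalDegree ≤ (2 * d) ^ (n * Nat.factorial n * 2 ^ ((n - 1) * n)) →
      f ∉ I → ∃ g : MvPolynomial (Fin n) k, f * g - 1 ∈ I) :
    I.IsMaximal := by
  have hbound : Fintype.card (Fin n) * MaximalUpToDegree.degreeBound d (Fintype.card (Fin n)) ≤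
      (2 * d) ^ (n * Nat.factorial n * 2 ^ ((n - 1) * n)) := by
    simpa using MaximalUpToDegree.mul_degreeBound_le hd hn
  exact maximal_up_to_bound_implies_maximal_general hd hproper hgen hdeg fun f hf =>
    hmax f (hf.trans hbound)
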